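/- Let G be a connected graph on n ≥ 2 vertices with positive edge weights w_e, and consider the associated reversible random walk that moves from u to a neighbor x with probability w_{u,x}/Σ_{y∈N(u)} w_{u,y}; its stationary distribution is π(u) = w_u/w where w_u = Σ_{y∈N(u)} w_{u,y} and w = Σ_e w_e. Then the cover time of this walk satisfies C(G) ≥ (n/4)·log(n/2). -/

import Mathlib

/-!
Matthews' lower bound in the commute-time form of Kahn, Kahale, Linial and Nisan, proved by
exhibiting an explicit subsolution for the expected cover time.

Let `c` be the symmetric conductance, `d x = ∑ y, c x y`, `W = ∑ x, d x`, and `L` the weighted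
Laplacian. There is a symmetric kernel `N` with `L (N · a) = W δ_a - d` (`exists_green`). The hitting
times are `H(x,a) = N a a - N x a` and the commute times are
`K(x,a) = N a a + N x x - 2 N x a`. Evaluating the Dirichlet energy, which is nonnegative, at
`N · a - N · x - (W / d a) δ_a` gives `K(x,a) ≥ W / d a` (`commute_lower`).

At least half of the vertices satisfy `d a ≤ 2 W / n`; on the set `S` of these, commute times are at
least `κ = n / 2`. For `A ⊆ S` nonempty put, with `h_k` the harmonic number,
`g(x, A) = (κ / 2) (h_{|A|} - 1) + avg_{a ∈ A} (N a a / 2 - N x a)`.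
If `x ∉ A` then `g(x, A) = 1 + ∑ y, P x y * g(y, A)`. If `x ∈ A` and `A ≠ {x}` then
`g(x, A) ≤ g(x, A \ {x})`, because `N a a / 2 - N x a = (K(x,a) - N x x) / 2` and `K ≥ κ`. Finally
`g(x, {x}) = - N x x / 2`. So, when `u` minimises `N u u` on `S`, running the walk from `u` and
tracking its position together with the unvisited part of `S` shows that the expected time to visit
`S` is at least `g(u, S) + N u u / 2 ≥ (κ / 2) h_{|S| - 1} ≥ (κ / 2) log |S|`.

The hitting times shifted by a constant give a supersolution, whence the series defining the cover
time converges (`sum_q_le`).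
-/


open Filter
open scoped BigOperators Classical

noncomputable section

namespace CF

variable {V : Type*} [Fintype V] [DecidableEq V]

/-- The degree of a vertex `v` in the graph `G`. -/
def deg (G : SimpleGraph V) (v : V) : ℕ :=
  (Finset.univ.filter fun w => G.Adj v w).card

/-- The edge bias `ψ(v,w) = 1 / min(d(v), d(w))` for adjacent `v, w`, and `0` otherwise. -/
def psi (G : SimpleGraph V) (v w : V) : ℝ :=
  if G.Adj v w then ((min (deg G v) (deg G w) : ℕ) : ℝ)⁻¹ else 0

/-- `Ψ(v) = Σ_{w ∈ N(v)} ψ(v,w)`  (the sum may be taken over all `w` since `ψ` vanishes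
off the neighbourhood). -/
def Psi (G : SimpleGraph V) (v : V) : ℝ := ∑ w, psi G v w

/-- The stationary distribution `π(v) = Ψ(v) / Σ_u Ψ(u)` of the biased random walk. -/
def statPi (G : SimpleGraph V) (v : V) : ℝ := Psi G v / ∑ u, Psi G u

/-- The one-step transition probability `P(v,w) = ψ(v,w)/Ψ(v)` of the biased random walk. -/
def step (G : SimpleGraph V) (v w : V) : ℝ := psi G v w / Psi G v

/-- The transition matrix of the biased random walk. -/
def stepMatrix (G : SimpleGraph V) : Matrix V V ℝ := Matrix.of fun v w => step G v w

/-- `R_v = Σ_{t=0}^{T-1} P^{(t)}(v,v)`, the expected number of visits to `v`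
(including time 0) of the biased walk started at `v` during the first `T` steps. -/
def Rv (G : SimpleGraph V) (T : ℕ) (v : V) : ℝ :=
  ∑ t ∈ Finset.range T, (stepMatrix G ^ t) v v

/-- Probability that a walk with transition kernel `P` follows the trajectory `x`
(conditional on starting at `x 0`). -/
def trajProbP (P : V → V → ℝ) {t : ℕ} (x : Fin (t + 1) → V) : ℝ :=
  ∏ i : Fin t, P (x i.castSucc) (x i.succ)

/-- Probability that the walk with kernel `P` started at `u` has not visited every
vertex among its positions at times `0, 1, …, t`. -/
def notCoveredProbP (P : V → V → ℝ) (u : V) (t : ℕ) : ℝ :=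
  ∑ x ∈ Finset.univ.filter (fun x : Fin (t + 1) → V =>
      x 0 = u ∧ Finset.image x Finset.univ ≠ Finset.univ), trajProbP P x

/-- Expected cover time of the walk with kernel `P` started from `u`,
via `E[T_cov] = Σ_{t ≥ 0} P(T_cov > t)`. -/
def coverTimeFromP (P : V → V → ℝ) (u : V) : ℝ := ∑' t : ℕ, notCoveredProbP P u t

/-- Cover time of the walk with kernel `P`: the maximum over starting vertices. -/
def coverTimeP (P : V → V → ℝ) : ℝ := ⨆ u, coverTimeFromP P u

/-- Expected time for the biased random walk started at `u` to visit every vertex. -/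
def coverTimeFrom (G : SimpleGraph V) (u : V) : ℝ := coverTimeFromP (step G) u

/-- The cover time `C̄(G)` of the biased random walk on `G`. -/
def coverTime (G : SimpleGraph V) : ℝ := coverTimeP (step G)

/-- Probability that the biased walk on `G` started at `w` avoids the set `F`
at all times `0, 1, …, t`. -/
def avoidProb (G : SimpleGraph V) (w : V) (t : ℕ) (F : Finset V) : ℝ :=
  ∑ x ∈ Finset.univ.filter (fun x : Fin (t + 1) → V =>
      x 0 = w ∧ ∀ i, x i ∉ F), trajProbP (step G) x

/-- `e(S,S)`: the number of edges of `G` with both endpoints in `S`. -/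
def eIn (G : SimpleGraph V) (S : Finset V) : ℕ :=
  (Finset.univ.filter fun e : Sym2 V => e ∈ G.edgeSet ∧ ∀ x ∈ e, x ∈ S).card

/-- `e(S, S̄)`: the number of edges of `G` with exactly one endpoint in `S`. -/
def eCross (G : SimpleGraph V) (S : Finset V) : ℕ :=
  (Finset.univ.filter fun e : Sym2 V =>
    e ∈ G.edgeSet ∧ ∃ x ∈ S, ∃ y ∈ Sᶜ, e = s(x, y)).card

/-- The graph obtained from `G` by contracting the (non-adjacent) vertices `u` and `v`
into a single vertex, represented by `u`; the vertex `v` is left isolated. -/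
def contract (G : SimpleGraph V) (u v : V) : SimpleGraph V :=
  SimpleGraph.fromRel fun x y =>
    x ≠ v ∧ y ≠ v ∧ (G.Adj x y ∨ (x = u ∧ G.Adj v y))

/-- The graph on `Fin n` determined by a configuration of edge indicators. -/
def graphOf {n : ℕ} (ω : Sym2 (Fin n) → Bool) : SimpleGraph (Fin n) :=
  SimpleGraph.fromRel fun x y => ω s(x, y)

/-- The product Bernoulli(p) weight of a configuration of edge indicators. -/
def wt {n : ℕ} (p : ℝ) (ω : Sym2 (Fin n) → Bool) : ℝ :=
  ∏ e : Sym2 (Fin n), (if ω e then p else 1 - p)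

/-- The probability that the Erdős–Rényi random graph `G_{n,p}` satisfies `Q`. -/
def gnp (n : ℕ) (p : ℝ) (Q : SimpleGraph (Fin n) → Prop) : ℝ :=
  ∑ ω ∈ Finset.univ.filter (fun ω : Sym2 (Fin n) → Bool => Q (graphOf ω)), wt p ω

/-- A graph `G` on vertex set `Fin n` is *typical* (for the parameters `ε` and `c`,
with `p = c log n / n`) if it satisfies conditions (a)–(i) of Lemma 4 (Cooper–Frieze–Petti). -/
def Typical (ε c : ℝ) {n : ℕ} (G : SimpleGraph (Fin n)) : Prop :=
  let p : ℝ := c * Real.log n / n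
  let np : ℝ := (n : ℝ) * p
  let Lam : ℝ := Real.log (Real.log n)
  let A : Finset (Fin n) := Finset.univ.filter fun v => (deg G v : ℝ) < np / 100
  -- (a) connectivity
  G.Connected ∧
  -- (b) few vertices of low degree
  (((Finset.univ.filter fun v : Fin n => (deg G v : ℝ) < (1 - ε) * np).card : ℝ)
      ≤ (n : ℝ) ^ (1 - ε ^ 2 * c / 4)) ∧
  -- (c) few vertices of high degree
  (((Finset.univ.filter fun v : Fin n => (1 + ε) * np < (deg G v : ℝ)).card : ℝ)
      ≤ (n : ℝ) ^ (1 - ε ^ 2 * c / 4)) ∧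
  -- (d) maximum degree
  (∀ v : Fin n, (deg G v : ℝ) ≤ 4 * np) ∧
  -- (e) few vertices of each small degree
  (∀ k : ℕ, (k : ℝ) ≤ Lam →
      ((Finset.univ.filter fun v : Fin n => deg G v = k).card : ℝ)
        ≤ (3 * Real.log n) ^ (k + 1)) ∧
  -- (f)(i) the set A of small-degree vertices is small
  ((A.card : ℝ) < (n : ℝ) ^ ((17 : ℝ) / 12 - c)) ∧
  -- (f)(ii) no vertex of A within distance Λ of a short cycle
  (∀ v ∈ A, ∀ x : Fin n, ∀ w : G.Walk x x, w.IsCycle → (w.length : ℝ) < Lam →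
      ∀ y ∈ w.support, Lam < (G.dist v y : ℝ)) ∧
  -- (f)(iii) vertices of A are far apart
  (∀ u ∈ A, ∀ v ∈ A, u ≠ v → Lam < (G.dist u v : ℝ)) ∧
  -- (g) no small dense subgraphs
  (np ≤ (n : ℝ) ^ ((1 : ℝ) / 100) →
      ∀ S : Finset (Fin n), S.card ≤ 50 → eIn G S ≤ S.card) ∧
  -- (h) edge expansion of large sets
  (∀ S : Finset (Fin n), 1 / p ≤ (S.card : ℝ) → (S.card : ℝ) ≤ (n : ℝ) / 2 →
      (S.card : ℝ) * ((n : ℝ) - S.card) * p / 2 ≤ (eCross G S : ℝ)) ∧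
  -- (i) small sets are sparse
  (∀ S : Finset (Fin n), (S.card : ℝ) < 1 / p →
      (eIn G S : ℝ) < (S.card : ℝ) * np / 1000)

end CF

namespace CoverLower

open Finset

variable {V : Type*} [Fintype V]

/-! ### The weighted Laplacian and its Green kernel -/

/-- The weighted Laplacian of the conductance `c`. -/
def lap (c : V → V → ℝ) (f : V → ℝ) (x : V) : ℝ := ∑ y, c x y * (f x - f y)

/-- Green's identity. -/
lemma sum_mul_lap (c : V → V → ℝ) (hs : ∀ x y, c x y = c y x) (g f : V → ℝ) :
    ∑ x, g x * lap c f x = (1 / 2) * ∑ x, ∑ y, c x y * ((g x - g y) * (f x - f y)) := by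
  have h1 : ∑ x, g x * lap c f x = ∑ x, ∑ y, c x y * (g x * (f x - f y)) := by
    refine sum_congr rfl fun x _ => ?_
    rw [lap, mul_sum]
    exact sum_congr rfl fun y _ => by ring
  have h2 : ∑ x, g x * lap c f x = ∑ x, ∑ y, c x y * (g y * (f y - f x)) := by
    rw [h1, sum_comm]
    exact sum_congr rfl fun x _ => sum_congr rfl fun y _ => by rw [hs]
  have h3 : ∑ x, ∑ y, c x y * ((g x - g y) * (f x - f y))
      = ∑ x, ∑ y, c x y * (g x * (f x - f y)) + ∑ x, ∑ y, c x y * (g y * (f y - f x)) := by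
    rw [← sum_add_distrib]
    refine sum_congr rfl fun x _ => ?_
    rw [← sum_add_distrib]
    exact sum_congr rfl fun y _ => by ring
  rw [h3, ← h1, ← h2]
  ring

lemma sum_mul_lap_comm (c : V → V → ℝ) (hs : ∀ x y, c x y = c y x) (g f : V → ℝ) :
    ∑ x, g x * lap c f x = ∑ x, f x * lap c g x := by
  rw [sum_mul_lap c hs, sum_mul_lap c hs]
  congr 1
  exact sum_congr rfl fun x _ => sum_congr rfl fun y _ => by ring

lemma sum_lap (c : V → V → ℝ) (hs : ∀ x y, c x y = c y x) (f : V → ℝ) :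
    ∑ x, lap c f x = 0 := by
  have := sum_mul_lap c hs (fun _ => 1) f
  simpa using this

lemma energy_nonneg (c : V → V → ℝ) (hs : ∀ x y, c x y = c y x) (hc : ∀ x y, 0 ≤ c x y)
    (f : V → ℝ) : 0 ≤ ∑ x, f x * lap c f x := by
  rw [sum_mul_lap c hs]
  refine mul_nonneg (by norm_num) (sum_nonneg fun x _ => sum_nonneg fun y _ => ?_)
  exact mul_nonneg (hc x y) (mul_self_nonneg _)

lemma eq_of_lap_zero (c : V → V → ℝ) (hs : ∀ x y, c x y = c y x) (hc : ∀ x y, 0 ≤ c x y)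
    (f : V → ℝ) (h : ∀ x, lap c f x = 0) (x y : V) (hxy : 0 < c x y) : f x = f y := by
  have h0 := sum_mul_lap c hs f f
  simp only [h, mul_zero, sum_const_zero] at h0
  have hnn : ∀ x y, 0 ≤ c x y * ((f x - f y) * (f x - f y)) := fun x y =>
    mul_nonneg (hc x y) (mul_self_nonneg _)
  have h1 : ∑ x, ∑ y, c x y * ((f x - f y) * (f x - f y)) = 0 := by linarith
  rw [sum_eq_zero_iff_of_nonneg fun x _ => sum_nonneg fun y _ => hnn x y] at h1
  have h2 := h1 x (mem_univ _)
  rw [sum_eq_zero_iff_of_nonneg fun y _ => hnn x y] at h2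
  have h3 := h2 y (mem_univ _)
  rcases mul_eq_zero.1 h3 with h4 | h4
  · linarith
  · have := mul_self_eq_zero.1 h4
    linarith

variable [DecidableEq V]

/-- Existence of the Green kernel, normalised to be orthogonal to `d`, which makes it symmetric. -/
lemma exists_green (c : V → V → ℝ) (hs : ∀ x y, c x y = c y x) (hc : ∀ x y, 0 ≤ c x y)
    (hconn : ∀ f : V → ℝ, (∀ x y, 0 < c x y → f x = f y) → ∀ x y, f x = f y)
    (hW : 0 < ∑ x, ∑ y, c x y) :
    ∃ N : V → V → ℝ, (∀ x a, N x a = N a x) ∧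
      ∀ x a, lap c (fun z => N z a) x
        = (if x = a then ∑ x, ∑ y, c x y else 0) - ∑ y, c x y := by
  set d : V → ℝ := fun x => ∑ y, c x y with hd
  set W : ℝ := ∑ x, d x with hWd
  have hW' : 0 < W := hW
  -- The rank-one term `d dᵀ` makes the Laplacian invertible without changing it on `d^⊥`.
  let T : (V → ℝ) →ₗ[ℝ] (V → ℝ) :=
    { toFun := fun f x => lap c f x + d x * ∑ y, d y * f y
      map_add' := by
        intro f g
        funext x
        simp only [lap, Pi.add_apply, mul_add, sum_add_distrib]
        have : ∑ y, c x y * (f x + g x - (f y + g y))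
            = ∑ y, c x y * (f x - f y) + ∑ y, c x y * (g x - g y) := by
          rw [← sum_add_distrib]
          exact sum_congr rfl fun y _ => by ring
        rw [this]
        ring
      map_smul' := by
        intro r f
        funext x
        simp only [lap, Pi.smul_apply, smul_eq_mul, RingHom.id_apply, mul_add, mul_sum]
        congr 1 <;> exact sum_congr rfl fun y _ => by ring }
  have hT : ∀ f x, T f x = lap c f x + d x * ∑ y, d y * f y := fun f x => rfl
  have key : ∀ f, ∑ x, T f x = W * ∑ y, d y * f y := by
    intro f
    simp only [hT, sum_add_distrib, sum_lap c hs, ← sum_mul, zero_add, hWd]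
  have hinj : Function.Injective T := by
    rw [← LinearMap.ker_eq_bot, LinearMap.ker_eq_bot']
    intro f hf
    have h1 := key f
    rw [hf] at h1
    have h2 : ∑ y, d y * f y = 0 := by
      simpa [hW'.ne'] using h1.symm
    have h3 : ∀ x, lap c f x = 0 := by
      intro x
      have := hT f x
      rw [hf, h2] at this
      simpa using this.symm
    have h4 := hconn f (eq_of_lap_zero c hs hc f h3)
    funext x
    have h5 : ∑ y, d y * f y = W * f x := by
      rw [hWd, sum_mul]
      exact sum_congr rfl fun y _ => by rw [h4 y x]
    rw [h2] at h5
    have h6 := mul_eq_zero.1 h5.symm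
    exact h6.resolve_left hW'.ne'
  have hsurj : Function.Surjective T := LinearMap.injective_iff_surjective.1 hinj
  choose M hM using fun a : V => hsurj (fun x => (if x = a then W else 0) - d x)
  have hM0 : ∀ a, ∑ y, d y * M a y = 0 := by
    intro a
    have h1 := key (M a)
    rw [hM a] at h1
    have h2 : ∑ x, ((if x = a then W else 0) - d x) = 0 := by
      rw [sum_sub_distrib]
      simp [hWd]
    rw [h2] at h1
    exact (mul_eq_zero.1 h1.symm).resolve_left hW'.ne'
  have hL : ∀ a x, lap c (M a) x = (if x = a then W else 0) - d x := by
    intro a x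
    have h1 := hT (M a) x
    rw [hM a, hM0 a] at h1
    simpa using h1.symm
  have hpair : ∀ a b, ∑ x, M a x * lap c (M b) x = M a b * W := by
    intro a b
    simp only [hL, mul_sub, sum_sub_distrib]
    have : ∑ x, M a x * d x = 0 := by
      rw [← hM0 a]
      exact sum_congr rfl fun y _ => by ring
    rw [this]
    simp
  refine ⟨fun x a => M a x, ?_, fun x a => hL a x⟩
  intro x a
  have := sum_mul_lap_comm c hs (M a) (M x)
  rw [hpair, hpair] at this
  exact mul_right_cancel₀ hW'.ne' this

/-- The commute time between `x` and `a` is at least the mean return time `W / d a` to `a`. -/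
lemma commute_lower (c : V → V → ℝ) (hs : ∀ x y, c x y = c y x) (hc : ∀ x y, 0 ≤ c x y)
    (hcd : ∀ x, c x x = 0)
    (N : V → V → ℝ) (hN : ∀ x a, N x a = N a x) (W : ℝ) (hW : 0 < W)
    (hL : ∀ x a, lap c (fun z => N z a) x = (if x = a then W else 0) - ∑ y, c x y)
    (x a : V) (hxa : x ≠ a) (hda : 0 < ∑ y, c a y) :
    W / (∑ y, c a y) ≤ N a a + N x x - 2 * N x a := by
  set D := ∑ y, c a y with hD
  set h : V → ℝ := fun z => N z a - N z x with hh
  set δ : V → ℝ := fun z => if z = a then 1 else 0 with hδ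
  set t : ℝ := W / D with ht
  have hlh : ∀ z, lap c h z = (if z = a then W else 0) - (if z = x then W else 0) := by
    intro z
    have h1 : lap c h z = lap c (fun z => N z a) z - lap c (fun z => N z x) z := by
      simp only [lap, ← sum_sub_distrib, hh]
      exact sum_congr rfl fun y _ => by ring
    rw [h1, hL, hL]
    ring
  have hlsub : ∀ z, lap c (fun z => h z - t * δ z) z = lap c h z - t * lap c δ z := by
    intro z
    simp only [lap, mul_sum, ← sum_sub_distrib]
    exact sum_congr rfl fun y _ => by ring
  have hδa : lap c δ a = D := by
    rw [hD, lap]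
    refine sum_congr rfl fun y _ => ?_
    by_cases hy : y = a
    · subst hy; simp [hcd]
    · simp [hδ, hy]
  have e1 : ∑ z, h z * lap c h z = W * (h a - h x) := by
    simp only [hlh, mul_sub, sum_sub_distrib]
    simp
    ring
  have e2 : ∑ z, δ z * lap c h z = W := by
    simp [hδ, hlh, hxa.symm]
  have e3 : ∑ z, h z * lap c δ z = W := by
    rw [sum_mul_lap_comm c hs, e2]
  have e4 : ∑ z, δ z * lap c δ z = D := by
    rw [← hδa]
    simp [hδ]
  have e := energy_nonneg c hs hc (fun z => h z - t * δ z)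
  have e5 : ∑ z, (h z - t * δ z) * lap c (fun z => h z - t * δ z) z
      = ∑ z, h z * lap c h z - t * ∑ z, δ z * lap c h z - t * ∑ z, h z * lap c δ z
        + t * t * ∑ z, δ z * lap c δ z := by
    simp only [hlsub, mul_sum, ← sum_sub_distrib, ← sum_add_distrib]
    exact sum_congr rfl fun y _ => by ring
  rw [e5, e1, e2, e3, e4] at e
  have htD : t * D = W := by rw [ht]; field_simp
  have e6 : 0 ≤ W * ((h a - h x) - t) := by
    have : t * t * D = t * W := by rw [mul_assoc, htD]
    rw [this] at e
    linarith
  have e7 : 0 ≤ (h a - h x) - t := nonneg_of_mul_nonneg_right e6 hW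
  simp only [hh] at e7
  rw [hN a x] at e7
  linarith

/-! ### The probability of not yet having visited a set -/

/-- `q P t x A` is the probability that the walk with kernel `P` started at `x` has not visited
all of `A` at the times `0, …, t`, defined by conditioning on the first step. -/
def q (P : V → V → ℝ) : ℕ → V → Finset V → ℝ
  | 0, x, A => if A.erase x = ∅ then 0 else 1
  | t + 1, x, A => ∑ y, P x y * q P t y (A.erase x)

lemma q_nonneg (P : V → V → ℝ) (hP : ∀ x y, 0 ≤ P x y) (t : ℕ) (x : V) (A : Finset V) :
    0 ≤ q P t x A := by
  induction t generalizing x A with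
  | zero => rw [q]; split_ifs <;> norm_num
  | succ t ih => exact sum_nonneg fun y _ => mul_nonneg (hP x y) (ih _ _)

lemma q_mono (P : V → V → ℝ) (hP : ∀ x y, 0 ≤ P x y) (t : ℕ) (x : V) (A B : Finset V)
    (h : A ⊆ B) : q P t x A ≤ q P t x B := by
  induction t generalizing x A B with
  | zero =>
    have := erase_subset_erase x h
    rw [q, q]
    split_ifs with h1 h2
    · exact le_rfl
    · norm_num
    · rename_i h2
      rw [h2, subset_empty] at this
      exact absurd this h1
    · exact le_rfl
  | succ t ih =>
    exact sum_le_sum fun y _ => mul_le_mul_of_nonneg_left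
      (ih _ _ _ (erase_subset_erase x h)) (hP x y)

lemma q_empty (P : V → V → ℝ) (t : ℕ) (x : V) : q P t x ∅ = 0 := by
  induction t generalizing x with
  | zero => simp [q]
  | succ t ih => simp [q, ih]

/-- The sum over trajectories agrees with the recursive description `q`. -/
lemma sum_traj (P : V → V → ℝ) (t : ℕ) (u : V) (A : Finset V) :
    (∑ x : Fin (t + 1) → V, if x 0 = u ∧ ¬ A ⊆ Finset.image x Finset.univ
      then CF.trajProbP P x else 0) = q P t u A := by
  induction t generalizing u A with
  | zero =>
    rw [← (Equiv.funUnique (Fin 1) V).symm.sum_comp]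
    simp only [CF.trajProbP, univ_eq_empty, prod_empty, q, erase_eq_empty_iff]
    rw [Finset.sum_eq_single u]
    · have : Finset.image ((Equiv.funUnique (Fin 1) V).symm u) Finset.univ = {u} := by
        ext z; simp [eq_comm]
      simp only [this, subset_singleton_iff]
      by_cases h : A = ∅ ∨ A = {u}
      · simp [h]
      · simp [h]
    · intro b _ hb
      simp [hb]
    · simp
  | succ t ih =>
    rw [← (Fin.consEquiv fun _ : Fin (t + 2) => V).sum_comp, Fintype.sum_prod_type]
    rw [Finset.sum_eq_single u]
    · rw [q]
      simp only [← ih]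
      have hpt : ∀ x : Fin (t + 1) → V,
          (if (Fin.consEquiv fun _ : Fin (t + 2) => V) (u, x) 0 = u ∧
              ¬ A ⊆ Finset.image ((Fin.consEquiv fun _ : Fin (t + 2) => V) (u, x)) Finset.univ
            then CF.trajProbP P ((Fin.consEquiv fun _ : Fin (t + 2) => V) (u, x)) else 0)
          = ∑ y, P u y * (if x 0 = y ∧ ¬ A.erase u ⊆ Finset.image x Finset.univ
              then CF.trajProbP P x else 0) := by
        intro x
        have himg : A ⊆ Finset.image ((Fin.consEquiv fun _ : Fin (t + 2) => V) (u, x)) Finset.univ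
            ↔ A.erase u ⊆ Finset.image x Finset.univ := by
          have : Finset.image ((Fin.consEquiv fun _ : Fin (t + 2) => V) (u, x)) Finset.univ
              = insert u (Finset.image x Finset.univ) := by
            ext z
            simp [Fin.exists_fin_succ, eq_comm]
          rw [this, subset_insert_iff]
        have htr : CF.trajProbP P ((Fin.consEquiv fun _ : Fin (t + 2) => V) (u, x))
            = P u (x 0) * CF.trajProbP P x := by
          simp only [CF.trajProbP]
          rw [Fin.prod_univ_succ]
          simp [Fin.consEquiv]
        simp only [himg, htr]
        rw [Finset.sum_eq_single (x 0)]
        · simp [Fin.consEquiv]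
        · intro b _ hb
          simp [hb.symm]
        · simp
      simp only [hpt, mul_sum]
      rw [Finset.sum_comm]
    · intro b _ hb
      refine Finset.sum_eq_zero fun x _ => ?_
      simp [Fin.consEquiv, hb]
    · simp

lemma notCovered_eq (P : V → V → ℝ) (t : ℕ) (u : V) :
    CF.notCoveredProbP P u t = q P t u Finset.univ := by
  rw [← sum_traj, CF.notCoveredProbP, Finset.sum_filter]
  refine Finset.sum_congr rfl fun x _ => ?_
  simp only [univ_subset_iff, ne_eq]

/-! ### Comparison with a supersolution and a subsolution -/

/-- Nonnegative functions `U · a` which drop by one on average off `a` bound the expected number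
of steps before all of `A` is visited. -/
lemma sum_q_le (P : V → V → ℝ) (hP : ∀ x y, 0 ≤ P x y)
    (U : V → V → ℝ) (hU : ∀ x a, 0 ≤ U x a)
    (hUP : ∀ x a, x ≠ a → U x a = 1 + ∑ y, P x y * U y a)
    (t : ℕ) (x : V) (A : Finset V) :
    ∑ s ∈ Finset.range t, q P s x A ≤ ∑ a ∈ A, U x a := by
  induction t generalizing x A with
  | zero => simpa using sum_nonneg fun a _ => hU x a
  | succ t ih =>
    rw [sum_range_succ']
    have hrec : ∑ s ∈ Finset.range t, q P (s + 1) x A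
        = ∑ y, P x y * ∑ s ∈ Finset.range t, q P s y (A.erase x) := by
      simp only [q, mul_sum]
      rw [sum_comm]
    rw [hrec]
    by_cases hA : A.erase x = ∅
    · simp only [hA, q, q_empty]
      simpa using sum_nonneg fun a _ => hU x a
    · have h1 : ∑ y, P x y * ∑ s ∈ Finset.range t, q P s y (A.erase x)
          ≤ ∑ y, P x y * ∑ a ∈ A.erase x, U y a :=
        sum_le_sum fun y _ => mul_le_mul_of_nonneg_left (ih y _) (hP x y)
      have h2 : ∑ y, P x y * ∑ a ∈ A.erase x, U y a = ∑ a ∈ A.erase x, (U x a - 1) := by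
        simp only [mul_sum]
        rw [sum_comm]
        refine sum_congr rfl fun a ha => ?_
        rw [hUP x a (ne_of_mem_erase ha).symm]
        ring
      have h3 : (1 : ℝ) ≤ ((A.erase x).card : ℝ) := by
        exact_mod_cast (nonempty_iff_ne_empty.2 hA).card_pos
      have h4 : ∑ a ∈ A.erase x, (U x a - 1) = ∑ a ∈ A.erase x, U x a - (A.erase x).card := by
        rw [sum_sub_distrib]; simp
      have h5 : ∑ a ∈ A.erase x, U x a ≤ ∑ a ∈ A, U x a :=
        sum_le_sum_of_subset_of_nonneg (erase_subset _ _) fun a _ _ => hU x a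
      have h6 : q P 0 x A = 1 := by simp only [q, hA, if_false]
      linarith

/-- Comparison principle for a subsolution `r` bounded by `B`, truncated at time `t`. -/
lemma le_sum_q (P : V → V → ℝ) (hP : ∀ x y, 0 ≤ P x y) (S : Finset V)
    (r : V → Finset V → ℝ) (B : ℝ) (hB : ∀ x A, r x A ≤ B)
    (hend : ∀ x ∈ S, r x {x} ≤ 0)
    (herase : ∀ x A, A ⊆ S → x ∈ A → (A.erase x).Nonempty → r x A ≤ r x (A.erase x))
    (hharm : ∀ x A, A.Nonempty → x ∉ A → r x A = 1 + ∑ y, P x y * r y A)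
    (t : ℕ) (x : V) (A : Finset V) (hA : A ⊆ S) (hne : A.Nonempty) :
    r x A ≤ ∑ s ∈ Finset.range t, q P s x A + B * q P t x A := by
  have hsingle : ∀ x A, A ⊆ S → A.Nonempty → A.erase x = ∅ → r x A ≤ 0 := by
    intro x A hA hne he
    rcases (erase_eq_empty_iff _ _).1 he with h | h
    · exact absurd h hne.ne_empty
    · subst h
      exact hend x (hA (mem_singleton_self x))
  have hq0 : ∀ s x A, A.erase x = ∅ → q P s x A = 0 := by
    intro s x A he
    cases s with
    | zero => simp only [q, he, if_true]
    | succ s => simp [q, he, q_empty]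
  induction t generalizing x A with
  | zero =>
    by_cases he : A.erase x = ∅
    · simpa [hq0 _ _ _ he] using hsingle x A hA hne he
    · simpa [q, he] using hB x A
  | succ t ih =>
    by_cases he : A.erase x = ∅
    · simpa [hq0 _ _ _ he] using hsingle x A hA hne he
    · have hne' : (A.erase x).Nonempty := nonempty_iff_ne_empty.2 he
      have h1 : r x A ≤ r x (A.erase x) := by
        by_cases hx : x ∈ A
        · exact herase x A hA hx hne'
        · rw [erase_eq_of_notMem hx]
      rw [hharm x _ hne' (notMem_erase x A)] at h1
      have h2 : ∑ y, P x y * r y (A.erase x) ≤ ∑ y, P x y *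
          (∑ s ∈ Finset.range t, q P s y (A.erase x) + B * q P t y (A.erase x)) :=
        sum_le_sum fun y _ => mul_le_mul_of_nonneg_left
          (ih y _ ((erase_subset _ _).trans hA) hne') (hP x y)
      have h3 : ∑ y, P x y *
          (∑ s ∈ Finset.range t, q P s y (A.erase x) + B * q P t y (A.erase x))
          = ∑ s ∈ Finset.range t, q P (s + 1) x A + B * q P (t + 1) x A := by
        simp only [q, mul_add, sum_add_distrib, mul_sum]
        congr 1
        · rw [sum_comm]
        · exact sum_congr rfl fun y _ => by ring
      have h4 : q P 0 x A = 1 := by simp only [q, he, if_false]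
      rw [sum_range_succ', h4]
      linarith

/-! ### The Matthews bound with commute times -/

/-- If the commute times within `S` are at least `κ`, some starting point in `S` has
expected cover time at least `(κ / 2) log |S|`. -/
lemma cover_lower (P : V → V → ℝ) (hP : ∀ x y, 0 ≤ P x y) (hP1 : ∀ x, ∑ y, P x y = 1)
    (N : V → V → ℝ) (hNP : ∀ x a, x ≠ a → N x a = ∑ y, P x y * N y a - 1)
    (S : Finset V) (hS : S.Nonempty) (κ : ℝ)
    (hκ : ∀ x ∈ S, ∀ a ∈ S, x ≠ a → κ ≤ N a a + N x x - 2 * N x a) (hκ0 : 0 ≤ κ) :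
    κ / 2 * Real.log S.card ≤ CF.coverTimeP P := by
  obtain ⟨u, huS, hu⟩ := S.exists_min_image (fun a => N a a) hS
  obtain ⟨C, hC⟩ := (Set.finite_range fun p : V × V => N p.1 p.2 - N p.2 p.2).bddAbove
  have hC' : ∀ x a, N x a - N a a ≤ C := fun x a => hC ⟨(x, a), rfl⟩
  have hsummable : ∀ A, Summable fun t => q P t u A := by
    intro A
    refine summable_of_sum_range_le (fun t => q_nonneg P hP t u A)
      (sum_q_le P hP (fun x a => N a a - N x a + C) ?_ ?_ · u A)
    · intro x a
      linarith [hC' x a]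
    · intro x a hxa
      have : ∑ y, P x y * (N a a - N y a + C)
          = (∑ y, P x y) * (N a a + C) - ∑ y, P x y * N y a := by
        rw [sum_mul, ← sum_sub_distrib]
        exact sum_congr rfl fun y _ => by ring
      rw [this, hP1, hNP x a hxa]
      ring
  let r : V → Finset V → ℝ := fun x A =>
    κ / 2 * ((harmonic A.card : ℝ) - 1) + N u u / 2 + (∑ a ∈ A, (N a a / 2 - N x a)) / A.card
  obtain ⟨B, hB⟩ := (Set.finite_range fun p : V × Finset V => r p.1 p.2).bddAbove
  -- The points of `A` other than `x` contribute at least `(κ - N x x) / 2` each.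
  have hsumge : ∀ x A, A ⊆ S → x ∈ A →
      ((A.erase x).card : ℝ) * ((κ - N x x) / 2) ≤ ∑ a ∈ A.erase x, (N a a / 2 - N x a) := by
    intro x A hA hx
    rw [← nsmul_eq_mul]
    refine card_nsmul_le_sum _ _ _ fun a ha => ?_
    have := hκ x (hA hx) a (hA (mem_of_mem_erase ha)) (ne_of_mem_erase ha).symm
    linarith
  have hmain : ∀ t, r u S ≤ ∑ s ∈ Finset.range t, q P s u S + B * q P t u S := by
    intro t
    refine le_sum_q P hP S r B (fun x A => hB ⟨(x, A), rfl⟩) ?_ ?_ ?_ t u S subset_rfl hS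
    · intro x hx
      simp only [r, card_singleton, sum_singleton]
      have := hu x hx
      simp [harmonic]
      linarith
    · intro x A hA hx hne
      obtain ⟨k, hk⟩ : ∃ k, (A.erase x).card = k + 1 :=
        ⟨(A.erase x).card - 1, by have := hne.card_pos; omega⟩
      have hkA : A.card = k + 2 := by
        have := card_erase_add_one hx
        omega
      have h1 := hsumge x A hA hx
      simp only [r]
      rw [← add_sum_erase A _ hx, hkA]
      rw [hk] at h1 ⊢
      set Z := ∑ a ∈ A.erase x, (N a a / 2 - N x a)
      rw [show k + 2 = (k + 1) + 1 from rfl, harmonic_succ (k + 1)]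
      push_cast at h1 ⊢
      have hk1 : (0 : ℝ) < (k : ℝ) + 1 := by positivity
      have hk2 : (0 : ℝ) < (k : ℝ) + 1 + 1 := by positivity
      have h2 : (κ - N x x) / 2 ≤ Z / ((k : ℝ) + 1) := by
        rw [le_div_iff₀ hk1]; linarith
      have h3 : κ / 2 * ((k : ℝ) + 1 + 1)⁻¹ + (N x x / 2 - N x x + Z) / ((k : ℝ) + 1 + 1)
          = Z / ((k : ℝ) + 1)
            - (Z / ((k : ℝ) + 1) - (κ - N x x) / 2) / ((k : ℝ) + 1 + 1) := by
        field_simp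
        ring
      have h4 : 0 ≤ (Z / ((k : ℝ) + 1) - (κ - N x x) / 2) / ((k : ℝ) + 1 + 1) :=
        div_nonneg (by linarith) hk2.le
      linarith
    · intro x A hne hx
      have hcard : (A.card : ℝ) ≠ 0 := by exact_mod_cast hne.card_pos.ne'
      set K := κ / 2 * ((harmonic A.card : ℝ) - 1) + N u u / 2 with hK
      have h1 : ∑ y, P x y * r y A
          = K + (∑ y, P x y * ∑ a ∈ A, (N a a / 2 - N y a)) / A.card := by
        have : ∀ y, P x y * r y A
            = P x y * K + (P x y * ∑ a ∈ A, (N a a / 2 - N y a)) / A.card := by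
          intro y
          simp only [r, ← hK]
          ring
        simp only [this, sum_add_distrib, ← sum_mul, hP1, one_mul, sum_div]
      have h2 : ∑ y, P x y * ∑ a ∈ A, (N a a / 2 - N y a)
          = ∑ a ∈ A, (N a a / 2 - N x a) - A.card := by
        simp only [mul_sum]
        rw [sum_comm, eq_sub_iff_add_eq, card_eq_sum_ones, Nat.cast_sum, ← sum_add_distrib]
        refine sum_congr rfl fun a ha => ?_
        have hxa : x ≠ a := fun h => hx (h ▸ ha)
        simp only [mul_sub, sum_sub_distrib, ← sum_mul, hP1]
        rw [hNP x a hxa]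
        push_cast
        ring
      rw [h1, h2]
      simp only [r, ← hK]
      field_simp
      ring
  have hlim : r u S ≤ ∑' t, q P t u S := by
    have h1 := (hsummable S).hasSum.tendsto_sum_nat
    have h2 := ((hsummable S).tendsto_atTop_zero).const_mul B
    have h3 := h1.add h2
    rw [mul_zero, add_zero] at h3
    exact ge_of_tendsto' h3 hmain
  have hcov : ∑' t, q P t u S ≤ CF.coverTimeP P := by
    have h1 : ∑' t, q P t u S ≤ CF.coverTimeFromP P u := by
      rw [CF.coverTimeFromP]
      simp only [notCovered_eq]
      exact (hsummable S).tsum_le_tsum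
        (fun t => q_mono P hP t u S _ (subset_univ _)) (hsummable _)
    exact h1.trans (le_ciSup (f := fun u => CF.coverTimeFromP P u)
      (Set.finite_range _).bddAbove u)
  refine le_trans ?_ (hlim.trans hcov)
  obtain ⟨k, hk⟩ : ∃ k, S.card = k + 1 := ⟨S.card - 1, by have := hS.card_pos; omega⟩
  have h1 := hsumge u S subset_rfl huS
  have hke : (S.erase u).card = k := by
    have := card_erase_add_one huS
    omega
  simp only [r]
  rw [← add_sum_erase S _ huS, hk, harmonic_succ]
  rw [hke] at h1
  have hlog := log_add_one_le_harmonic k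
  push_cast
  have hk1 : (0 : ℝ) < (k : ℝ) + 1 := by positivity
  set Z := ∑ a ∈ S.erase u, (N a a / 2 - N u a)
  have h2 : (N u u / 2 - N u u + (k : ℝ) * ((κ - N u u) / 2)) / ((k : ℝ) + 1)
      ≤ (N u u / 2 - N u u + Z) / ((k : ℝ) + 1) := by gcongr
  have h3 : (N u u / 2 - N u u + (k : ℝ) * ((κ - N u u) / 2)) / ((k : ℝ) + 1)
      = κ / 2 - κ / 2 * ((k : ℝ) + 1)⁻¹ - N u u / 2 := by
    field_simp
    ring
  have h4 : κ / 2 * Real.log ((k : ℝ) + 1) ≤ κ / 2 * (harmonic k : ℝ) := by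
    refine mul_le_mul_of_nonneg_left ?_ (by linarith)
    exact_mod_cast hlog
  rw [h3] at h2
  linarith

end CoverLower

/-- Any reversible (weighted) random walk on a connected graph `G` on
`n ≥ 2` vertices — moving from `u` to a neighbour `x` with probability
`w(u,x) / Σ_{y ∈ N(u)} w(u,y)` for symmetric positive edge weights — has cover time at
least `(n/4) log(n/2)`. -/
theorem weighted_walk_cover_time_lower
    {V : Type*} [Fintype V] [DecidableEq V]
    (G : SimpleGraph V) (hn : 2 ≤ Fintype.card V) (hG : G.Connected)
    (w : V → V → ℝ) (hsym : ∀ u x : V, w u x = w x u)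
    (hpos : ∀ u x : V, G.Adj u x → 0 < w u x) :
    ((Fintype.card V : ℝ) / 4) * Real.log ((Fintype.card V : ℝ) / 2) ≤
      CF.coverTimeP (fun u x : V =>
        if G.Adj u x then w u x / ∑ y ∈ Finset.univ.filter (fun y => G.Adj u y), w u y
        else 0) := by
  set c : V → V → ℝ := fun u x => if G.Adj u x then w u x else 0 with hcdef
  have hs : ∀ x y, c x y = c y x := by
    intro x y
    simp only [hcdef, G.adj_comm x y, hsym x y]
  have hc : ∀ x y, 0 ≤ c x y := by
    intro x y
    simp only [hcdef]
    split_ifs with h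
    · exact (hpos x y h).le
    · exact le_rfl
  have hcd : ∀ x, c x x = 0 := fun x => by simp [hcdef]
  have hcpos : ∀ x y, G.Adj x y → 0 < c x y := by
    intro x y h
    simp only [hcdef, h, if_true]
    exact hpos x y h
  have hP : (fun u x : V =>
      if G.Adj u x then w u x / ∑ y ∈ Finset.univ.filter (fun y => G.Adj u y), w u y else 0)
      = fun u x => c u x / ∑ y, c u y := by
    funext u x
    simp only [hcdef, Finset.sum_filter, ite_div, zero_div]
  rw [hP]
  have hnt : Nontrivial V := Fintype.one_lt_card_iff_nontrivial.1 (by omega)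
  have hd : ∀ x, 0 < ∑ y, c x y := by
    intro x
    obtain ⟨y, hy⟩ := hG.preconnected.exists_adj_of_nontrivial x
    exact Finset.sum_pos' (fun y _ => hc x y) ⟨y, Finset.mem_univ _, hcpos x y hy⟩
  have hW : 0 < ∑ x, ∑ y, c x y := Finset.sum_pos (fun x _ => hd x) Finset.univ_nonempty
  have hconn : ∀ f : V → ℝ, (∀ x y, 0 < c x y → f x = f y) → ∀ x y, f x = f y := by
    intro f hf x y
    obtain ⟨p⟩ := hG.preconnected x y
    induction p with
    | nil => rfl
    | cons h _ ih => exact (hf _ _ (hcpos _ _ h)).trans ih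
  obtain ⟨N, hN, hL⟩ := CoverLower.exists_green c hs hc hconn hW
  set W := ∑ x, ∑ y, c x y with hWdef
  set n : ℝ := (Fintype.card V : ℝ) with hndef
  have hn0 : 0 < n := by
    have : 0 < Fintype.card V := by omega
    exact Nat.cast_pos.2 this
  let S : Finset V := Finset.univ.filter fun a => ∑ y, c a y ≤ 2 * W / n
  -- Markov's inequality: fewer than half of the vertices carry more than twice the mean weight.
  have hcardS : n / 2 ≤ (S.card : ℝ) := by
    have h1 : ((Sᶜ).card : ℝ) * (2 * W / n) ≤ W := by
      calc ((Sᶜ).card : ℝ) * (2 * W / n) ≤ ∑ a ∈ Sᶜ, ∑ y, c a y := by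
            rw [← nsmul_eq_mul]
            refine Finset.card_nsmul_le_sum _ _ _ fun a ha => ?_
            have : ¬ (∑ y, c a y ≤ 2 * W / n) := by
              simpa [S] using ha
            linarith
        _ ≤ W := Finset.sum_le_sum_of_subset_of_nonneg (Finset.subset_univ _)
            fun a _ _ => (hd a).le
    have h2 : (S.card : ℝ) + (Sᶜ).card = n := by
      rw [hndef]
      exact_mod_cast Finset.card_add_card_compl S
    have h3 : ((Sᶜ).card : ℝ) * 2 * W ≤ n * W := by
      have : ((Sᶜ).card : ℝ) * (2 * W / n) = ((Sᶜ).card : ℝ) * 2 * W / n := by ring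
      rw [this, div_le_iff₀ hn0] at h1
      linarith
    have h4 := le_of_mul_le_mul_right h3 hW
    linarith
  have hSne : S.Nonempty := by
    rw [← Finset.card_pos]
    have : (0 : ℝ) < S.card := by linarith
    exact_mod_cast this
  have hmain := CoverLower.cover_lower (fun u x => c u x / ∑ y, c u y)
    (fun x y => div_nonneg (hc x y) (hd x).le)
    (fun x => by rw [← Finset.sum_div, div_self (hd x).ne'])
    N ?_ S hSne (n / 2) ?_ (by linarith)
  · refine le_trans ?_ hmain
    have : Real.log (n / 2) ≤ Real.log S.card := Real.log_le_log (by linarith) hcardS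
    have h2 : n / 2 / 2 = n / 4 := by ring
    rw [h2]
    exact mul_le_mul_of_nonneg_left this (by linarith)
  · intro x a hxa
    have h1 := hL x a
    rw [if_neg hxa] at h1
    have h2 : CoverLower.lap c (fun z => N z a) x
        = (∑ y, c x y) * N x a - ∑ y, c x y * N y a := by
      rw [CoverLower.lap, Finset.sum_mul, ← Finset.sum_sub_distrib]
      exact Finset.sum_congr rfl fun y _ => by ring
    have h3 : ∑ y, c x y / (∑ y, c x y) * N y a = (∑ y, c x y * N y a) / ∑ y, c x y := by
      rw [Finset.sum_div]
      exact Finset.sum_congr rfl fun y _ => by ring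
    have hdx := (hd x).ne'
    rw [h3]
    rw [h2] at h1
    field_simp
    linarith
  · intro x hx a ha hxa
    refine le_trans ?_ (CoverLower.commute_lower c hs hc hcd N hN W hW hL x a hxa (hd a))
    have h1 : ∑ y, c a y ≤ 2 * W / n := (Finset.mem_filter.1 ha).2
    rw [le_div_iff₀ hn0] at h1
    rw [le_div_iff₀ (hd a)]
    linarith
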